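/- Let X be a complex Banach space, let 0 < θ ≤ π/2, let q > 2 and s ∈ (1,2), and set p := q(s−1)/s; assume p > 1. Then for every T > 0 there exists a constant C_T > 0, depending only on T, θ, q and s, with C_T → 0 as T → 0⁺, such that for every scalar kernel a in the Bergman space B^q_θ (i.e. a : Σ_θ → ℂ holomorphic with finite B^q_θ norm) and every strongly measurable h : [0,T] → X with ∫_0^T ‖h(s)‖_X^p ds < ∞, one has (∫_0^T ‖∫_0^t a(t−s) h(s) ds‖_X^p dt)^{1/p} ≤ T^{(p−1)/p} · C_T · ‖a‖_{B^q_θ} · (∫_0^T ‖h(s)‖_X^p ds)^{1/p}, where a(t−s) denotes the value of a at the positive real number t−s. -/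

import Mathlib

open MeasureTheory Filter Set

/-- The open sector `Σ_θ` of angle `θ` in the complex plane. -/
def sector (θ : ℝ) : Set ℂ := {z : ℂ | z ≠ 0 ∧ |z.arg| < θ}

/-!
The sector `Σ_θ` contains the discs `B(r, δ r)`, `r > 0`, for some `δ > 0`. The mean value property
over these discs and Hölder's inequality give `|a(r)| ≤ (π δ²)^{-1/q} r^{-2/q} ‖a‖_{B^q_θ}`. Since
`q > 2`, the right-hand side is integrable on `(0, T)`, with integral a multiple of `T^{1 - 2/q}`,
and Young's inequality `L¹ ∗ L^p ⊆ L^p` bounds the convolution. Finally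
`T^{1 - 2/q} = T^{(p-1)/p} T^{1/p - 2/q}`, where `1/p > 2/q` because `s < 2`.
-/

open scoped ENNReal Topology Convolution

section MeanValue

variable {E : Type*} [NormedAddCommGroup E] [NormedSpace ℂ E] [CompleteSpace E]
  {f : ℂ → E} {c : ℂ} {R : ℝ}

lemma enorm_center_mul_le_lintegral_circle (hf : DifferentiableOn ℂ f (Metric.ball c R)) {z : ℂ}
    (hz : z ∈ Metric.ball c R) :
    ‖f c‖ₑ * ENNReal.ofReal (2 * Real.pi) ≤
      ∫⁻ φ in Ioc 0 (2 * Real.pi), ‖f (c + circleMap 0 1 φ * (z - c))‖ₑ := by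
  have hmaps : MapsTo (fun w ↦ c + w * (z - c)) (Metric.closedBall 0 1) (Metric.ball c R) := by
    intro w hw
    rw [mem_closedBall_zero_iff] at hw
    rw [mem_ball_iff_norm] at hz ⊢
    rw [add_sub_cancel_left, norm_mul]
    exact (mul_le_of_le_one_left (norm_nonneg _) hw).trans_lt hz
  have hdiff : DifferentiableOn ℂ (fun w ↦ f (c + w * (z - c))) (Metric.closedBall 0 1) :=
    hf.comp (by fun_prop) hmaps
  have hmean : ∫ φ in Ioc 0 (2 * Real.pi), f (c + circleMap 0 1 φ * (z - c)) =
      (2 * Real.pi) • f c := by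
    have h := (hdiff.diffContOnCl_ball
      (Metric.closedBall_subset_closedBall abs_one.le)).circleAverage
    rw [Real.circleAverage_def, intervalIntegral.integral_of_le Real.two_pi_pos.le,
      inv_smul_eq_iff₀ Real.two_pi_pos.ne'] at h
    simpa using h
  calc ‖f c‖ₑ * ENNReal.ofReal (2 * Real.pi)
    _ = ‖(2 * Real.pi) • f c‖ₑ := by
      rw [enorm_smul, Real.enorm_of_nonneg Real.two_pi_pos.le, mul_comm]
    _ ≤ _ := hmean ▸ enorm_integral_le_lintegral_enorm _

lemma setLIntegral_ball_comp_circleMap_mul (g : ℂ → ℝ≥0∞) (c : ℂ) (R φ : ℝ) :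
    ∫⁻ z in Metric.ball c R, g (c + circleMap 0 1 φ * (z - c)) = ∫⁻ z in Metric.ball c R, g z := by
  let e : ℂ ≃ᵐ ℂ := (MeasurableEquiv.subRight c).trans
    ((rotation (Circle.exp φ)).toMeasurableEquiv.trans (MeasurableEquiv.addLeft c))
  have he : ∀ z, e z = c + circleMap 0 1 φ * (z - c) := fun z ↦ by
    simp [e, circleMap]
    rfl
  have hmp : MeasurePreserving e :=
    (measurePreserving_add_left volume c).comp
      ((rotation (Circle.exp φ)).measurePreserving.comp (measurePreserving_sub_right volume c))
  have hpre : e ⁻¹' Metric.ball c R = Metric.ball c R := by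
    ext z
    simp [he, dist_eq_norm]
  simpa only [hpre, he] using
    hmp.setLIntegral_comp_preimage_emb e.measurableEmbedding g (Metric.ball c R)

-- Averaging the mean value property over the rotations of the disc about its centre, instead of
-- over the radii, avoids polar coordinates: each rotation preserves the integral over the disc.
lemma enorm_center_mul_volume_ball_le_setLIntegral (hf : DifferentiableOn ℂ f (Metric.ball c R)) :
    ‖f c‖ₑ * volume (Metric.ball c R) ≤ ∫⁻ z in Metric.ball c R, ‖f z‖ₑ := by
  have htwo_pi : ENNReal.ofReal (2 * Real.pi) ≠ 0 := by simp [Real.pi_pos]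
  have hmeas : AEMeasurable (Function.uncurry fun z φ ↦ ‖f (c + circleMap 0 1 φ * (z - c))‖ₑ)
      ((volume.restrict (Metric.ball c R)).prod (volume.restrict (Ioc 0 (2 * Real.pi)))) := by
    rw [Measure.prod_restrict]
    refine (ContinuousOn.aestronglyMeasurable ?_
      (measurableSet_ball.prod measurableSet_Ioc)).enorm
    refine hf.continuousOn.comp (by fun_prop) fun x hx ↦ ?_
    simpa [mem_ball_iff_norm, dist_eq_norm] using hx.1
  refine (ENNReal.mul_le_mul_iff_left htwo_pi ENNReal.ofReal_ne_top).1 ?_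
  calc ‖f c‖ₑ * volume (Metric.ball c R) * ENNReal.ofReal (2 * Real.pi)
    _ = ∫⁻ _ in Metric.ball c R, ‖f c‖ₑ * ENNReal.ofReal (2 * Real.pi) := by
      rw [setLIntegral_const]; ring
    _ ≤ ∫⁻ z in Metric.ball c R, ∫⁻ φ in Ioc 0 (2 * Real.pi),
          ‖f (c + circleMap 0 1 φ * (z - c))‖ₑ :=
      setLIntegral_mono' measurableSet_ball fun z hz ↦ enorm_center_mul_le_lintegral_circle hf hz
    _ = ∫⁻ φ in Ioc 0 (2 * Real.pi), ∫⁻ z in Metric.ball c R,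
          ‖f (c + circleMap 0 1 φ * (z - c))‖ₑ := lintegral_lintegral_swap hmeas
    _ = (∫⁻ z in Metric.ball c R, ‖f z‖ₑ) * ENNReal.ofReal (2 * Real.pi) := by
      simp [setLIntegral_ball_comp_circleMap_mul (fun z ↦ ‖f z‖ₑ)]

lemma enorm_center_mul_volume_ball_rpow_le_eLpNorm (hR : 0 < R)
    (hf : DifferentiableOn ℂ f (Metric.ball c R)) {q : ℝ≥0∞} (hq : 1 ≤ q) :
    ‖f c‖ₑ * volume (Metric.ball c R) ^ (1 / q.toReal) ≤
      eLpNorm f q (volume.restrict (Metric.ball c R)) := by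
  set V := volume (Metric.ball c R) with hV
  have hV0 : V ≠ 0 := (Metric.measure_ball_pos volume c hR).ne'
  have hVtop : V ≠ ∞ := measure_ball_lt_top.ne
  have hHolder := eLpNorm_le_eLpNorm_mul_rpow_measure_univ hq
    (hf.continuousOn.aestronglyMeasurable (μ := volume) measurableSet_ball)
  rw [eLpNorm_one_eq_lintegral_enorm, Measure.restrict_apply_univ, ENNReal.toReal_one, div_one,
    ← hV] at hHolder
  refine (ENNReal.mul_le_mul_iff_left (c := V ^ (1 - 1 / q.toReal))
    (ENNReal.rpow_pos hV0.bot_lt hVtop).ne' (ENNReal.rpow_ne_top_of_ne_zero hV0 hVtop)).1 ?_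
  calc ‖f c‖ₑ * V ^ (1 / q.toReal) * V ^ (1 - 1 / q.toReal)
    _ = ‖f c‖ₑ * V := by
      rw [mul_assoc, ← ENNReal.rpow_add _ _ hV0 hVtop, add_sub_cancel, ENNReal.rpow_one]
    _ ≤ ∫⁻ z in Metric.ball c R, ‖f z‖ₑ := enorm_center_mul_volume_ball_le_setLIntegral hf
    _ ≤ _ := hHolder

end MeanValue

section Young

lemma lintegral_rpow_le_measure_univ_rpow_mul {α : Type*} [MeasurableSpace α] {ν : Measure α}
    {g : α → ℝ≥0∞} (hg : AEMeasurable g ν) {p : ℝ} (hp : 1 ≤ p) :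
    (∫⁻ t, g t ∂ν) ^ p ≤ ν univ ^ (p - 1) * ∫⁻ t, g t ^ p ∂ν := by
  have hp0 : 0 < p := one_pos.trans_le hp
  have h := eLpNorm'_le_eLpNorm'_mul_rpow_measure_univ one_pos hp hg.aestronglyMeasurable
  simp only [eLpNorm'_eq_lintegral_enorm, enorm_eq_self, ENNReal.rpow_one, div_one] at h
  calc (∫⁻ t, g t ∂ν) ^ p
    _ ≤ ((∫⁻ t, g t ^ p ∂ν) ^ (1 / p) * ν univ ^ (1 - 1 / p)) ^ p := by gcongr
    _ = ν univ ^ (p - 1) * ∫⁻ t, g t ^ p ∂ν := by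
      rw [ENNReal.mul_rpow_of_nonneg _ _ hp0.le, ← ENNReal.rpow_mul, ← ENNReal.rpow_mul,
        one_div_mul_cancel hp0.ne', ENNReal.rpow_one, sub_mul, one_div_mul_cancel hp0.ne', one_mul,
        mul_comm]

variable {G : Type*} [AddGroup G] [MeasurableSpace G] {μ ν : Measure G}
  {𝕜 E E' F : Type*} [NontriviallyNormedField 𝕜] [NormedAddCommGroup E] [NormedSpace 𝕜 E]
  [NormedAddCommGroup E'] [NormedSpace 𝕜 E'] [NormedAddCommGroup F] [NormedSpace 𝕜 F]
  [NormedSpace ℝ F] (L : E →L[𝕜] E' →L[𝕜] F) {f : G → E} {g : G → E'}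

lemma enorm_convolution_le (hf : AEStronglyMeasurable f μ) (x : G) :
    ‖(f ⋆[L, μ] g) x‖ₑ ≤ ∫⁻ t, ‖g (x - t)‖ₑ ∂μ.withDensity (fun t ↦ ‖L‖ₑ * ‖f t‖ₑ) := by
  rw [lintegral_withDensity_eq_lintegral_mul_non_measurable₀ _ (hf.enorm.const_mul _)
    (ae_of_all _ fun t ↦ ENNReal.mul_lt_top enorm_lt_top enorm_lt_top)]
  refine (enorm_integral_le_lintegral_enorm _).trans (lintegral_mono fun t ↦ ?_)
  calc ‖L (f t) (g (x - t))‖ₑ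
    _ ≤ ‖L (f t)‖ₑ * ‖g (x - t)‖ₑ := (L (f t)).le_opENorm _
    _ ≤ ‖L‖ₑ * ‖f t‖ₑ * ‖g (x - t)‖ₑ := by gcongr; exact L.le_opENorm _

variable [MeasurableAdd₂ G] [MeasurableNeg G] [SFinite μ] [SFinite ν] [μ.IsAddRightInvariant]

-- Jensen's inequality inside, then Tonelli; in Young's inequality `ν` is the measure with density
-- `‖L‖ₑ * ‖f‖ₑ`.
lemma lintegral_lintegral_sub_rpow_le {g : G → ℝ≥0∞} (hg : AEMeasurable g μ) {p : ℝ}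
    (hp : 1 ≤ p) :
    ∫⁻ x, (∫⁻ t, g (x - t) ∂ν) ^ p ∂μ ≤ ν univ ^ p * ∫⁻ x, g x ^ p ∂μ := by
  have hmeas : AEMeasurable (fun x : G × G ↦ g (x.1 - x.2)) (μ.prod ν) :=
    hg.comp_quasiMeasurePreserving (quasiMeasurePreserving_sub_of_right_invariant μ ν)
  calc ∫⁻ x, (∫⁻ t, g (x - t) ∂ν) ^ p ∂μ
    _ ≤ ∫⁻ x, ν univ ^ (p - 1) * ∫⁻ t, g (x - t) ^ p ∂ν ∂μ :=
      lintegral_mono_ae <| hmeas.aestronglyMeasurable.prodMk_left.mono fun x hx ↦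
        lintegral_rpow_le_measure_univ_rpow_mul hx.aemeasurable hp
    _ = ν univ ^ (p - 1) * ∫⁻ t, ∫⁻ x, g (x - t) ^ p ∂μ ∂ν := by
      rw [lintegral_const_mul'' _ (hmeas.pow_const p).lintegral_prod_right',
        lintegral_lintegral_swap (hmeas.pow_const p)]
    _ = ν univ ^ (p - 1) * (ν univ * ∫⁻ x, g x ^ p ∂μ) := by
      simp_rw [lintegral_sub_right_eq_self (g · ^ p), lintegral_const, mul_comm]
    _ = ν univ ^ p * ∫⁻ x, g x ^ p ∂μ := by
      rw [← mul_assoc]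
      congr 1
      nth_rw 2 [← ENNReal.rpow_one (ν univ)]
      rw [← ENNReal.rpow_add_of_nonneg _ _ (sub_nonneg.2 hp) zero_le_one, sub_add_cancel]

lemma eLpNorm_lintegral_sub_le {g : G → ℝ≥0∞} (hg : AEMeasurable g μ) {p : ℝ≥0∞} (hp : 1 ≤ p)
    (hp_top : p ≠ ∞) :
    eLpNorm (fun x ↦ ∫⁻ t, g (x - t) ∂ν) p μ ≤ ν univ * eLpNorm g p μ := by
  have hp1 : 1 ≤ p.toReal := by simpa using ENNReal.toReal_mono hp_top hp
  have hp0 : 0 < p.toReal := one_pos.trans_le hp1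
  simp only [eLpNorm_eq_lintegral_rpow_enorm_toReal (one_pos.trans_le hp).ne' hp_top, enorm_eq_self]
  calc (∫⁻ x, (∫⁻ t, g (x - t) ∂ν) ^ p.toReal ∂μ) ^ (1 / p.toReal)
    _ ≤ (ν univ ^ p.toReal * ∫⁻ x, g x ^ p.toReal ∂μ) ^ (1 / p.toReal) := by
      gcongr
      exact lintegral_lintegral_sub_rpow_le hg hp1
    _ = ν univ * (∫⁻ x, g x ^ p.toReal ∂μ) ^ (1 / p.toReal) := by
      rw [ENNReal.mul_rpow_of_nonneg _ _ (by positivity), ← ENNReal.rpow_mul,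
        mul_one_div_cancel hp0.ne', ENNReal.rpow_one]

lemma aestronglyMeasurable_convolution (hf : AEStronglyMeasurable f μ)
    (hg : AEStronglyMeasurable g μ) : AEStronglyMeasurable (f ⋆[L, μ] g) μ :=
  (hf.convolution_integrand L hg).integral_prod_right'

lemma eLpNorm_convolution_le (hf : AEStronglyMeasurable f μ) (hg : AEStronglyMeasurable g μ)
    {p : ℝ≥0∞} (hp : 1 ≤ p) (hp_top : p ≠ ∞) :
    eLpNorm (f ⋆[L, μ] g) p μ ≤ ‖L‖ₑ * eLpNorm f 1 μ * eLpNorm g p μ := by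
  calc eLpNorm (f ⋆[L, μ] g) p μ
    _ ≤ eLpNorm (fun x ↦ ∫⁻ t, ‖g (x - t)‖ₑ ∂μ.withDensity (fun t ↦ ‖L‖ₑ * ‖f t‖ₑ)) p μ :=
      eLpNorm_mono_enorm fun x ↦ enorm_convolution_le L hf x
    _ ≤ μ.withDensity (fun t ↦ ‖L‖ₑ * ‖f t‖ₑ) univ * eLpNorm (fun x ↦ ‖g x‖ₑ) p μ :=
      eLpNorm_lintegral_sub_le hg.enorm hp hp_top
    _ = ‖L‖ₑ * eLpNorm f 1 μ * eLpNorm g p μ := by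
      rw [withDensity_apply _ MeasurableSet.univ, setLIntegral_univ,
        lintegral_const_mul'' _ hf.enorm, eLpNorm_one_eq_lintegral_enorm, eLpNorm_enorm]

end Young

section FiniteConvolution

variable {𝕜 E E' F : Type*} [NontriviallyNormedField 𝕜] [NormedAddCommGroup E] [NormedSpace 𝕜 E]
  [NormedAddCommGroup E'] [NormedSpace 𝕜 E'] [NormedAddCommGroup F] [NormedSpace 𝕜 F]
  [NormedSpace ℝ F] (L : E →L[𝕜] E' →L[𝕜] F) {f : ℝ → E} {g : ℝ → E'} {T : ℝ}

lemma convolution_indicator_Ioc {t : ℝ} (ht : t ≤ T) :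
    ((Ioc 0 T).indicator f ⋆[L] (Ioc 0 T).indicator g) t = ∫ u in Ioc 0 t, L (f (t - u)) (g u) := by
  rw [convolution_eq_swap, ← integral_indicator measurableSet_Ioc]
  refine integral_congr_ae ((Measure.ae_ne volume t).mono fun u hu ↦ ?_)
  by_cases hut : u ∈ Ioc 0 t
  · have hu_mem : u ∈ Ioc 0 T := ⟨hut.1, hut.2.trans ht⟩
    have hsub_mem : t - u ∈ Ioc 0 T :=
      ⟨sub_pos.2 (hut.2.lt_of_ne hu), (sub_le_self t hut.1.le).trans ht⟩
    simp [hut, hu_mem, hsub_mem]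
  · have hdisj : t - u ∉ Ioc 0 T ∨ u ∉ Ioc 0 T := by
      by_contra! h
      exact hut ⟨h.2.1, (sub_pos.1 h.1.1).le⟩
    rcases hdisj with h | h <;> simp [hut, h]

lemma aestronglyMeasurable_finite_convolution
    (hf : AEStronglyMeasurable f (volume.restrict (Ioc 0 T)))
    (hg : AEStronglyMeasurable g (volume.restrict (Ioc 0 T))) :
    AEStronglyMeasurable (fun t ↦ ∫ u in Ioc 0 t, L (f (t - u)) (g u))
      (volume.restrict (Ioc 0 T)) := by
  rw [← aestronglyMeasurable_indicator_iff measurableSet_Ioc] at hf hg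
  exact (aestronglyMeasurable_convolution L hf hg).restrict.congr <|
    (ae_restrict_mem measurableSet_Ioc).mono fun t ht ↦ convolution_indicator_Ioc L ht.2

lemma eLpNorm_finite_convolution_le (hf : AEStronglyMeasurable f (volume.restrict (Ioc 0 T)))
    (hg : AEStronglyMeasurable g (volume.restrict (Ioc 0 T))) {p : ℝ≥0∞} (hp : 1 ≤ p)
    (hp_top : p ≠ ∞) :
    eLpNorm (fun t ↦ ∫ u in Ioc 0 t, L (f (t - u)) (g u)) p (volume.restrict (Ioc 0 T)) ≤
      ‖L‖ₑ * eLpNorm f 1 (volume.restrict (Ioc 0 T)) *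
        eLpNorm g p (volume.restrict (Ioc 0 T)) := by
  calc eLpNorm (fun t ↦ ∫ u in Ioc 0 t, L (f (t - u)) (g u)) p (volume.restrict (Ioc 0 T))
    _ = eLpNorm ((Ioc 0 T).indicator f ⋆[L] (Ioc 0 T).indicator g) p
          (volume.restrict (Ioc 0 T)) :=
      eLpNorm_congr_ae <| (ae_restrict_mem measurableSet_Ioc).mono fun t ht ↦
        (convolution_indicator_Ioc L ht.2).symm
    _ ≤ eLpNorm ((Ioc 0 T).indicator f ⋆[L] (Ioc 0 T).indicator g) p volume :=
      eLpNorm_restrict_le _ _ _ _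
    _ ≤ _ := by
      simp only [← eLpNorm_indicator_eq_eLpNorm_restrict measurableSet_Ioc]
      exact eLpNorm_convolution_le L
        ((aestronglyMeasurable_indicator_iff measurableSet_Ioc).2 hf)
        ((aestronglyMeasurable_indicator_iff measurableSet_Ioc).2 hg) hp hp_top

end FiniteConvolution

section RealExponent

variable {α E : Type*} [MeasurableSpace α] {μ : Measure α} [NormedAddCommGroup E] {f : α → E}
  {p : ℝ}

lemma memLp_ofReal_iff_integrable_rpow_norm (hp : 0 < p) (hf : AEStronglyMeasurable f μ) :
    MemLp f (ENNReal.ofReal p) μ ↔ Integrable (fun x ↦ ‖f x‖ ^ p) μ := by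
  rw [← integrable_norm_rpow_iff hf (by simpa) ENNReal.ofReal_ne_top, ENNReal.toReal_ofReal hp.le]

lemma eLpNorm_ofReal_eq_ofReal_integral_rpow_norm (hp : 0 < p)
    (hf : MemLp f (ENNReal.ofReal p) μ) :
    eLpNorm f (ENNReal.ofReal p) μ = ENNReal.ofReal ((∫ x, ‖f x‖ ^ p ∂μ) ^ (1 / p)) := by
  rw [hf.eLpNorm_eq_integral_rpow_norm (by simpa) ENNReal.ofReal_ne_top,
    ENNReal.toReal_ofReal hp.le, one_div]

lemma integral_rpow_norm_rpow_le_of_eLpNorm_le {β F : Type*} [MeasurableSpace β] {ν : Measure β}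
    [NormedAddCommGroup F] {g : β → F} {K : ℝ} (hp : 0 < p) (hf : AEStronglyMeasurable f μ)
    (hg : MemLp g (ENNReal.ofReal p) ν) (hK : 0 ≤ K)
    (hfg : eLpNorm f (ENNReal.ofReal p) μ ≤ ENNReal.ofReal K * eLpNorm g (ENNReal.ofReal p) ν) :
    Integrable (fun x ↦ ‖f x‖ ^ p) μ ∧
      (∫ x, ‖f x‖ ^ p ∂μ) ^ (1 / p) ≤ K * (∫ y, ‖g y‖ ^ p ∂ν) ^ (1 / p) := by
  have hf_mem : MemLp f (ENNReal.ofReal p) μ :=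
    ⟨hf, hfg.trans_lt (ENNReal.mul_lt_top ENNReal.ofReal_lt_top hg.eLpNorm_lt_top)⟩
  refine ⟨(memLp_ofReal_iff_integrable_rpow_norm hp hf).1 hf_mem, ?_⟩
  rwa [eLpNorm_ofReal_eq_ofReal_integral_rpow_norm hp hf_mem,
    eLpNorm_ofReal_eq_ofReal_integral_rpow_norm hp hg, ← ENNReal.ofReal_mul hK,
    ENNReal.ofReal_le_ofReal_iff (by positivity)] at hfg

end RealExponent

section Bergman

variable {E : Type*} [NormedAddCommGroup E] [NormedSpace ℂ E] [CompleteSpace E]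
  {f : ℂ → E} {S : Set ℂ} {q : ℝ≥0∞}

lemma measurableSet_sector (θ : ℝ) : MeasurableSet (sector θ) :=
  (measurableSet_singleton 0).compl.inter <|
    measurableSet_lt (continuous_abs.measurable.comp Complex.measurable_arg) measurable_const

lemma exists_forall_ball_mul_subset_sector {θ : ℝ} (hθ : 0 < θ) :
    ∃ δ > 0, ∀ r : ℝ, 0 < r → Metric.ball (r : ℂ) (δ * r) ⊆ sector θ := by
  have hsector_nhds : sector θ ∈ 𝓝 (1 : ℂ) := by
    refine (eventually_ne_nhds one_ne_zero).and ?_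
    refine (Complex.continuousAt_arg Complex.one_mem_slitPlane).abs.eventually_lt_const ?_
    simpa using hθ
  obtain ⟨δ, hδ, hball⟩ := Metric.mem_nhds_iff.1 hsector_nhds
  refine ⟨δ, hδ, fun r hr z hz ↦ ?_⟩
  have hr_ne : (r : ℂ) ≠ 0 := by exact_mod_cast hr.ne'
  have hscaled : ((r⁻¹ : ℝ) : ℂ) * z ∈ Metric.ball (1 : ℂ) δ := by
    have hsub : ((r⁻¹ : ℝ) : ℂ) * z - 1 = ((r⁻¹ : ℝ) : ℂ) * (z - r) := by
      push_cast
      field_simp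
    rw [mem_ball_iff_norm] at hz ⊢
    rwa [hsub, norm_mul, Complex.norm_of_nonneg (inv_nonneg.2 hr.le), inv_mul_lt_iff₀' hr]
  have hmem := hball hscaled
  rw [sector, mem_ofPred_eq, Complex.arg_real_mul _ (inv_pos.2 hr)] at hmem
  exact ⟨right_ne_zero_of_mul hmem.1, hmem.2⟩

lemma enorm_le_rpow_mul_eLpNorm_of_ball_subset {c : ℂ} {R : ℝ} (hR : 0 < R)
    (hS : Metric.ball c R ⊆ S) (hf : DifferentiableOn ℂ f S) (hq : 1 ≤ q) :
    ‖f c‖ₑ ≤ ENNReal.ofReal ((Real.pi * R ^ 2) ^ (-(1 / q.toReal))) *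
      eLpNorm f q (volume.restrict S) := by
  have hV : 0 < Real.pi * R ^ 2 := by positivity
  have hvol : volume (Metric.ball c R) = ENNReal.ofReal (Real.pi * R ^ 2) := by
    rw [Complex.volume_ball, mul_comm, ENNReal.ofReal_mul Real.pi_pos.le,
      ENNReal.ofReal_pow hR.le, ← NNReal.coe_real_pi, ENNReal.ofReal_coe_nnreal]
  have hmean := (enorm_center_mul_volume_ball_rpow_le_eLpNorm hR (hf.mono hS) hq).trans
    (eLpNorm_mono_measure f (Measure.restrict_mono_set volume hS))
  rw [hvol, ENNReal.ofReal_rpow_of_pos hV] at hmean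
  rw [Real.rpow_neg hV.le, ENNReal.ofReal_inv_of_pos (by positivity), mul_comm,
    ← div_eq_mul_inv, ENNReal.le_div_iff_mul_le (Or.inl (ENNReal.ofReal_pos.2 (by positivity)).ne')
    (Or.inl ENNReal.ofReal_ne_top)]
  exact hmean

lemma setLIntegral_Ioc_rpow {s T : ℝ} (hs : -1 < s) (hT : 0 ≤ T) :
    ∫⁻ r in Ioc 0 T, ENNReal.ofReal (r ^ s) = ENNReal.ofReal (T ^ (s + 1) / (s + 1)) := by
  have hint : IntegrableOn (fun r : ℝ ↦ r ^ s) (Ioc 0 T) :=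
    (intervalIntegrable_iff_integrableOn_Ioc_of_le hT).1
      (intervalIntegral.intervalIntegrable_rpow' hs)
  rw [← ofReal_integral_eq_lintegral_ofReal hint ((ae_restrict_mem measurableSet_Ioc).mono
      fun r hr ↦ Real.rpow_nonneg hr.1.le s), ← intervalIntegral.integral_of_le hT,
    integral_rpow (Or.inl hs), Real.zero_rpow (by linarith), sub_zero]

lemma eLpNorm_one_Ioc_le_mul_eLpNorm_of_ball_subset {δ T : ℝ} (hδ : 0 < δ)
    (hS : ∀ r : ℝ, 0 < r → Metric.ball (r : ℂ) (δ * r) ⊆ S) (hf : DifferentiableOn ℂ f S)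
    (hq : 2 < q) (hT : 0 ≤ T) :
    eLpNorm (fun r : ℝ ↦ f r) 1 (volume.restrict (Ioc 0 T)) ≤
      ENNReal.ofReal ((Real.pi * δ ^ 2) ^ (-(1 / q.toReal)) *
        (T ^ (1 - 2 / q.toReal) / (1 - 2 / q.toReal))) * eLpNorm f q (volume.restrict S) := by
  set A := (Real.pi * δ ^ 2) ^ (-(1 / q.toReal))
  have hexp : -1 < -(2 / q.toReal) := by
    rcases eq_or_ne q ∞ with rfl | hq_top
    · simp
    · have : 2 < q.toReal := (ENNReal.toReal_lt_toReal ENNReal.ofNat_ne_top hq_top).2 hq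
      rw [neg_lt_neg_iff, div_lt_one (by linarith)]
      exact this
  have hpow (r : ℝ) (hr : 0 < r) :
      (Real.pi * (δ * r) ^ 2) ^ (-(1 / q.toReal)) = A * r ^ (-(2 / q.toReal)) := by
    rw [mul_pow, ← mul_assoc, Real.mul_rpow (by positivity) (by positivity), ← Real.rpow_natCast r,
      ← Real.rpow_mul hr.le]
    congr 2
    push_cast
    ring
  calc eLpNorm (fun r : ℝ ↦ f r) 1 (volume.restrict (Ioc 0 T))
    _ = ∫⁻ r in Ioc 0 T, ‖f (r : ℂ)‖ₑ := eLpNorm_one_eq_lintegral_enorm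
    _ ≤ ∫⁻ r in Ioc 0 T, ENNReal.ofReal A * ENNReal.ofReal (r ^ (-(2 / q.toReal))) *
          eLpNorm f q (volume.restrict S) := by
      refine setLIntegral_mono' measurableSet_Ioc fun r hr ↦ ?_
      rw [← ENNReal.ofReal_mul (by positivity), ← hpow r hr.1]
      exact enorm_le_rpow_mul_eLpNorm_of_ball_subset (mul_pos hδ hr.1) (hS r hr.1) hf
        (one_le_two.trans hq.le)
    _ = _ := by
      rw [lintegral_mul_const _ (by fun_prop), lintegral_const_mul _ (by fun_prop),
        setLIntegral_Ioc_rpow hexp hT, ← ENNReal.ofReal_mul (by positivity), neg_add_eq_sub]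

variable {X F : Type*} [NormedAddCommGroup X] [NormedSpace ℂ X] [NormedAddCommGroup F]
  [NormedSpace ℂ F]

lemma integral_finite_convolution_rpow_le_of_ball_subset {L : E →L[ℂ] X →L[ℂ] F} (hL : ‖L‖ ≤ 1)
    {δ T q p : ℝ} (hδ : 0 < δ) (hS_meas : MeasurableSet S)
    (hS : ∀ r : ℝ, 0 < r → Metric.ball (r : ℂ) (δ * r) ⊆ S) (hf : DifferentiableOn ℂ f S)
    (hq : 2 < q) (hfq : IntegrableOn (fun z ↦ ‖f z‖ ^ q) S) (hT : 0 ≤ T) (hp : 1 ≤ p)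
    {h : ℝ → X} (hh : AEStronglyMeasurable h (volume.restrict (Ioc 0 T)))
    (hhp : IntegrableOn (fun u ↦ ‖h u‖ ^ p) (Ioc 0 T)) :
    IntegrableOn (fun t ↦ ‖∫ u in Ioc 0 t, L (f ((t - u : ℝ) : ℂ)) (h u)‖ ^ p) (Ioc 0 T) ∧
      (∫ t in Ioc 0 T, ‖∫ u in Ioc 0 t, L (f ((t - u : ℝ) : ℂ)) (h u)‖ ^ p) ^ (1 / p) ≤
        (Real.pi * δ ^ 2) ^ (-(1 / q)) * (T ^ (1 - 2 / q) / (1 - 2 / q)) *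
          (∫ z in S, ‖f z‖ ^ q) ^ (1 / q) * (∫ u in Ioc 0 T, ‖h u‖ ^ p) ^ (1 / p) := by
  have hq0 : 0 < q := two_pos.trans hq
  have hp0 : 0 < p := one_pos.trans_le hp
  have hexp : 0 < 1 - 2 / q := sub_pos.2 ((div_lt_one hq0).2 hq)
  have hL_enorm : ‖L‖ₑ ≤ 1 := by rwa [← ofReal_norm, ENNReal.ofReal_le_one]
  have hpos_mem (r : ℝ) (hr : r ∈ Ioc 0 T) : (r : ℂ) ∈ S :=
    hS r hr.1 (Metric.mem_ball_self (mul_pos hδ hr.1))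
  have hf_meas : AEStronglyMeasurable (fun r : ℝ ↦ f r) (volume.restrict (Ioc 0 T)) :=
    (hf.continuousOn.comp Complex.continuous_ofReal.continuousOn hpos_mem).aestronglyMeasurable
      measurableSet_Ioc
  have hf_mem : MemLp f (ENNReal.ofReal q) (volume.restrict S) :=
    (memLp_ofReal_iff_integrable_rpow_norm hq0
      (hf.continuousOn.aestronglyMeasurable hS_meas)).2 hfq
  have hkernel := eLpNorm_one_Ioc_le_mul_eLpNorm_of_ball_subset hδ hS hf
    (q := ENNReal.ofReal q) (by simpa using hq) hT
  rw [ENNReal.toReal_ofReal hq0.le, eLpNorm_ofReal_eq_ofReal_integral_rpow_norm hq0 hf_mem,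
    ← ENNReal.ofReal_mul (by positivity)] at hkernel
  refine integral_rpow_norm_rpow_le_of_eLpNorm_le hp0
    (aestronglyMeasurable_finite_convolution L hf_meas hh)
    ((memLp_ofReal_iff_integrable_rpow_norm hp0 hh).2 hhp) (by positivity) ?_
  calc eLpNorm (fun t ↦ ∫ u in Ioc 0 t, L (f ((t - u : ℝ) : ℂ)) (h u)) (ENNReal.ofReal p)
        (volume.restrict (Ioc 0 T))
    _ ≤ ‖L‖ₑ * eLpNorm (fun r : ℝ ↦ f r) 1 (volume.restrict (Ioc 0 T)) *
          eLpNorm h (ENNReal.ofReal p) (volume.restrict (Ioc 0 T)) :=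
      eLpNorm_finite_convolution_le L hf_meas hh (by simpa using hp) ENNReal.ofReal_ne_top
    _ ≤ _ := by
      gcongr
      exact (mul_le_of_le_one_left' hL_enorm).trans hkernel

end Bergman

lemma tendsto_const_mul_rpow_nhdsGT_zero (K : ℝ) {β : ℝ} (hβ : 0 < β) :
    Tendsto (fun x : ℝ ↦ K * x ^ β) (𝓝[>] 0) (𝓝 0) := by
  have h := ((Real.continuousAt_rpow_const 0 β (Or.inr hβ.le)).tendsto.const_mul K).mono_left
    (nhdsWithin_le_nhds (s := Ioi 0))
  rwa [Real.zero_rpow hβ.ne', mul_zero] at h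

theorem convolution_bergman_kernel_estimate_general {E X F : Type*} [NormedAddCommGroup E]
    [NormedSpace ℂ E] [CompleteSpace E] [NormedAddCommGroup X] [NormedSpace ℂ X]
    [NormedAddCommGroup F] [NormedSpace ℂ F] [CompleteSpace F] {L : E →L[ℂ] X →L[ℂ] F}
    (hL : ‖L‖ ≤ 1) {θ q p : ℝ} (hθ : 0 < θ) (hp : 1 ≤ p) (hpq : 2 * p < q) :
    ∃ C : ℝ → ℝ, (∀ T > 0, 0 < C T) ∧ Tendsto C (𝓝[>] 0) (𝓝 0) ∧
      ∀ T > 0, ∀ a : ℂ → E, DifferentiableOn ℂ a (sector θ) →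
        IntegrableOn (fun z ↦ ‖a z‖ ^ q) (sector θ) →
        ∀ h : ℝ → X, AEStronglyMeasurable h (volume.restrict (Ioc 0 T)) →
          IntegrableOn (fun u ↦ ‖h u‖ ^ p) (Ioc 0 T) →
          IntegrableOn (fun t ↦ ‖∫ u in Ioc 0 t, L (a ((t - u : ℝ) : ℂ)) (h u)‖ ^ p) (Ioc 0 T) ∧
          (∫ t in Ioc 0 T, ‖∫ u in Ioc 0 t, L (a ((t - u : ℝ) : ℂ)) (h u)‖ ^ p) ^ (1 / p) ≤
            T ^ ((p - 1) / p) * C T * (∫ z in sector θ, ‖a z‖ ^ q) ^ (1 / q) *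
              (∫ u in Ioc 0 T, ‖h u‖ ^ p) ^ (1 / p) := by
  obtain ⟨δ, hδ, hball⟩ := exists_forall_ball_mul_subset_sector hθ
  have hp0 : 0 < p := one_pos.trans_le hp
  have hq : 2 < q := by linarith
  have hexp : 0 < 1 - 2 / q := sub_pos.2 ((div_lt_one (two_pos.trans hq)).2 hq)
  have hβ : 0 < 1 / p - 2 / q := sub_pos.2 ((div_lt_div_iff₀ (by linarith) hp0).2 (by linarith))
  set K := (Real.pi * δ ^ 2) ^ (-(1 / q)) / (1 - 2 / q) with hK_def
  have hK : 0 < K := by positivity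
  refine ⟨fun T ↦ K * T ^ (1 / p - 2 / q), fun T hT ↦ mul_pos hK (Real.rpow_pos_of_pos hT _),
    tendsto_const_mul_rpow_nhdsGT_zero K hβ, fun T hT a ha haq h hh hhp ↦ ?_⟩
  have hC : T ^ ((p - 1) / p) * (K * T ^ (1 / p - 2 / q)) =
      (Real.pi * δ ^ 2) ^ (-(1 / q)) * (T ^ (1 - 2 / q) / (1 - 2 / q)) := by
    have hsplit : 1 - 2 / q = (p - 1) / p + (1 / p - 2 / q) := by field_simp; ring
    rw [hK_def, hsplit, Real.rpow_add hT]
    ring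
  rw [hC]
  exact integral_finite_convolution_rpow_le_of_ball_subset hL hδ (measurableSet_sector θ) hball ha
    hq haq hT.le hp hh hhp

/-- `L^p` estimate for the finite convolution with a Bergman-space
kernel: for every `T > 0` there is `C_T > 0` (depending only on `T, θ, q, s`),
with `C_T → 0` as `T → 0⁺`, such that
`‖a ⋆ h‖_{L^p(0,T;X)} ≤ T^{(p-1)/p} C_T ‖a‖_{B^q_θ} ‖h‖_{L^p(0,T;X)}`. -/
theorem convolution_bergman_kernel_estimate {X : Type*} [NormedAddCommGroup X]
    [NormedSpace ℂ X] [CompleteSpace X]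
    (θ q s p : ℝ) (hθ0 : 0 < θ) (hθ : θ ≤ Real.pi / 2)
    (hq : 2 < q) (hs1 : 1 < s) (hs2 : s < 2)
    (hp : p = q * (s - 1) / s) (hp1 : 1 < p) :
    ∃ C : ℝ → ℝ, (∀ T > 0, 0 < C T) ∧
      Tendsto C (nhdsWithin 0 (Ioi 0)) (nhds 0) ∧
      ∀ T > 0, ∀ a : ℂ → ℂ,
        DifferentiableOn ℂ a (sector θ) →
        IntegrableOn (fun z => ‖a z‖ ^ q) (sector θ) →
        ∀ h : ℝ → X, StronglyMeasurable h →
          IntegrableOn (fun u => ‖h u‖ ^ p) (Ioc (0:ℝ) T) →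
          (∫ t in Ioc (0:ℝ) T, ‖∫ u in Ioc (0:ℝ) t, a (((t - u : ℝ)) : ℂ) • h u‖ ^ p) ^ (1 / p) ≤
            T ^ ((p - 1) / p) * C T * (∫ z in sector θ, ‖a z‖ ^ q) ^ (1 / q) *
              (∫ u in Ioc (0:ℝ) T, ‖h u‖ ^ p) ^ (1 / p) := by
  have hpq : 2 * p < q := by
    rw [hp, mul_div_assoc', div_lt_iff₀ (by linarith)]
    nlinarith
  obtain ⟨C, hC, hC0, hest⟩ := convolution_bergman_kernel_estimate_general
    (ContinuousLinearMap.opNorm_lsmul_le (𝕜 := ℂ) (R := ℂ) (E := X)) hθ0 hp1.le hpq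
  exact ⟨C, hC, hC0, fun T hT a ha haq h hh hhp ↦
    (hest T hT a ha haq h hh.aestronglyMeasurable hhp).2⟩
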